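/- arXiv:1506.02555 — 2 statements merged into one kernel-verified Lean document; each statement's English description precedes it below -/
import Mathlib

section
/- For every natural number n and every complex number z with Re z ≥ 0, one has R_n(z) ≠ 0; that is, all zeros of the polynomial R_n lie in the open left half-plane {z ∈ ℂ : Re z < 0}. -/
/-- `R n z = ∑_{m=0}^{n} ((n+m)! / (m! (n-m)!)) z^m` for `z ∈ ℂ`. -/
noncomputable def R (n : ℕ) (z : ℂ) : ℂ :=
  ∑ m ∈ Finset.range (n + 1),
    ((Nat.factorial (n + m) : ℂ) / ((Nat.factorial m : ℂ) * (Nat.factorial (n - m) : ℂ))) * z ^ m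

/-!
The polynomials satisfy `R (n + 2) z = 2 (2 n + 3) z R (n + 1) z + R n z`. Multiplying by the
conjugate of `R (n + 1) z` and taking real parts gives the identity
`D (n + 1) = 2 (2 n + 3) (Re z) |R (n + 1) z| ^ 2 + D n` for
`D n = Re (R (n + 1) z * conj (R n z))`. Since `D 0 = 1 + 2 Re z`, every `D n` is positive when
`0 ≤ Re z`, and so `R n z` cannot vanish.
-/

open Finset
open scoped InnerProductSpace Nat

lemma re_inner_pos_of_recurrence {𝕜 E : Type*} [RCLike 𝕜] [SeminormedAddCommGroup E]
    [InnerProductSpace 𝕜 E] {c : ℕ → 𝕜} {u : ℕ → E} (hc : ∀ n, 0 ≤ RCLike.re (c n))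
    (hu : ∀ n, u (n + 2) = c n • u (n + 1) + u n) (h₀ : 0 < RCLike.re ⟪u 0, u 1⟫_𝕜) (n : ℕ) :
    0 < RCLike.re ⟪u n, u (n + 1)⟫_𝕜 := by
  induction n with
  | zero => exact h₀
  | succ n ih =>
    have re_inner_succ : RCLike.re ⟪u (n + 1), u (n + 2)⟫_𝕜 =
        RCLike.re (c n) * ‖u (n + 1)‖ ^ 2 + RCLike.re ⟪u n, u (n + 1)⟫_𝕜 := by
      rw [hu, inner_add_right, inner_smul_right, inner_self_eq_norm_sq_to_K, map_add,
        ← RCLike.ofReal_pow, RCLike.re_mul_ofReal, inner_re_symm]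
    rw [re_inner_succ]
    exact add_pos_of_nonneg_of_pos (mul_nonneg (hc n) (sq_nonneg _)) ih

/-- The coefficient `(n + m)! / (m! (n - m)!)` of `z ^ m` in `R n z`. Writing it with binomial
coefficients extends it by zero to `n < m`, where the truncated `n - m` would not. -/
def coeffR (n m : ℕ) : ℕ :=
  (n + m).choose (2 * m) * (m ! * m.centralBinom)

lemma coeffR_zero_right (n : ℕ) : coeffR n 0 = 1 := by
  simp [coeffR]

lemma coeffR_eq_zero_of_lt {n m : ℕ} (h : n < m) : coeffR n m = 0 := by
  rw [coeffR, Nat.choose_eq_zero_of_lt (by lia), zero_mul]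

lemma coeffR_mul_factorial_mul_factorial {n m : ℕ} (h : m ≤ n) :
    coeffR n m * (m ! * (n - m)!) = (n + m)! := by
  have central : m.centralBinom * m ! * m ! = (2 * m)! := by
    rw [Nat.centralBinom, two_mul, Nat.add_choose_mul_factorial_mul_factorial]
  have outer : (n + m).choose (2 * m) * (2 * m)! * (n - m)! = (n + m)! := by
    rw [← Nat.choose_mul_factorial_mul_factorial (show 2 * m ≤ n + m by lia),
      show n + m - 2 * m = n - m by lia]
  rw [← outer, ← central, coeffR]
  ring

lemma cast_coeffR {K : Type*} [DivisionRing K] [CharZero K] {n m : ℕ} (h : m ≤ n) :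
    (coeffR n m : K) = (n + m)! / (m ! * (n - m)!) := by
  rw [eq_div_iff (by exact_mod_cast mul_ne_zero m.factorial_ne_zero (n - m).factorial_ne_zero)]
  exact_mod_cast coeffR_mul_factorial_mul_factorial h

lemma choose_add_choose_mul_two_mul_add_one (n m : ℕ) :
    ((n + m + 1).choose (2 * m + 1) + (n + m).choose (2 * m + 1)) * (2 * m + 1) =
      (2 * n + 1) * (n + m).choose (2 * m) := by
  rcases lt_or_ge n m with h | h
  · rw [Nat.choose_eq_zero_of_lt (show n + m + 1 < 2 * m + 1 by lia),
      Nat.choose_eq_zero_of_lt (show n + m < 2 * m + 1 by lia),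
      Nat.choose_eq_zero_of_lt (show n + m < 2 * m by lia), zero_add, zero_mul, mul_zero]
  · rw [add_mul, ← Nat.add_one_mul_choose_eq, Nat.choose_succ_right_eq, mul_comm (Nat.choose _ _),
      ← add_mul, show n + m + 1 + (n + m - 2 * m) = 2 * n + 1 by lia]

lemma coeffR_add_two_add_one (n m : ℕ) :
    coeffR (n + 2) (m + 1) = 2 * (2 * n + 3) * coeffR (n + 1) m + coeffR n (m + 1) := by
  have pascal : (n + 2 + (m + 1)).choose (2 * (m + 1)) =
      ((n + 1 + m + 1).choose (2 * m + 1) + (n + 1 + m).choose (2 * m + 1)) +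
        (n + (m + 1)).choose (2 * (m + 1)) := by
    rw [show n + 2 + (m + 1) = n + 1 + m + 1 + 1 by ring, show n + (m + 1) = n + 1 + m by ring,
      show 2 * (m + 1) = 2 * m + 1 + 1 by ring, Nat.choose_succ_succ',
      Nat.choose_succ_succ' (n + 1 + m) (2 * m + 1)]
    exact (add_assoc _ _ _).symm
  have central : (m + 1)! * (m + 1).centralBinom =
      2 * (2 * m + 1) * (m ! * m.centralBinom) := by
    rw [Nat.factorial_succ, mul_right_comm, Nat.succ_mul_centralBinom_succ]
    ring
  calc coeffR (n + 2) (m + 1)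
    _ = ((n + 1 + m + 1).choose (2 * m + 1) + (n + 1 + m).choose (2 * m + 1)) * (2 * m + 1) *
          (2 * (m ! * m.centralBinom)) + coeffR n (m + 1) := by
        rw [coeffR, coeffR, pascal, add_mul, central]
        ring
    _ = 2 * (2 * n + 3) * coeffR (n + 1) m + coeffR n (m + 1) := by
        rw [choose_add_choose_mul_two_mul_add_one, coeffR.eq_def (n + 1) m]
        ring

lemma R_eq_sum_coeffR {n N : ℕ} (h : n < N) (z : ℂ) :
    R n z = ∑ m ∈ range N, (coeffR n m : ℂ) * z ^ m := by
  calc R n z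
    _ = ∑ m ∈ range (n + 1), (coeffR n m : ℂ) * z ^ m :=
        sum_congr rfl fun m hm => by rw [cast_coeffR (mem_range_succ_iff.mp hm)]
    _ = ∑ m ∈ range N, (coeffR n m : ℂ) * z ^ m :=
        sum_subset (range_subset_range.mpr h) fun m _ hm => by
          rw [coeffR_eq_zero_of_lt (by simpa using hm), Nat.cast_zero, zero_mul]

lemma R_zero (z : ℂ) : R 0 z = 1 := by
  simp [R]

lemma R_one (z : ℂ) : R 1 z = 1 + 2 * z := by
  simp [R, sum_range_succ]

lemma R_add_two (n : ℕ) (z : ℂ) :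
    R (n + 2) z = 2 * (2 * n + 3) * z * R (n + 1) z + R n z := by
  rw [R_eq_sum_coeffR (show n + 2 < n + 3 by lia), R_eq_sum_coeffR (show n + 1 < n + 2 by lia),
    R_eq_sum_coeffR (show n < n + 3 by lia), sum_range_succ' _ (n + 2), sum_range_succ' _ (n + 2),
    mul_sum, ← add_assoc, ← sum_add_distrib, coeffR_zero_right, coeffR_zero_right]
  congr 1
  refine sum_congr rfl fun m _ => ?_
  rw [coeffR_add_two_add_one]
  push_cast
  ring

lemma re_inner_R_R_add_one_pos (n : ℕ) {z : ℂ} (hz : 0 ≤ z.re) :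
    0 < RCLike.re ⟪R n z, R (n + 1) z⟫_ℂ := by
  refine re_inner_pos_of_recurrence (c := fun n => 2 * (2 * n + 3) * z) (u := fun n => R n z)
    (fun n => ?_) (fun n => R_add_two n z) ?_ n
  · have re_coeff : (2 * (2 * n + 3) * z).re = 2 * (2 * n + 3) * z.re := by
      simp
    rw [RCLike.re_eq_complex_re, re_coeff]
    positivity
  · have re_inner_zero : RCLike.re ⟪R 0 z, R 1 z⟫_ℂ = 1 + 2 * z.re := by
      simp [R_zero, R_one]
    rw [re_inner_zero]
    positivity

/-- All zeros of `R n` lie in the open left half-plane: if `Re z ≥ 0` then `R n z ≠ 0`. -/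
theorem Rn_ne_zero_of_re_nonneg (n : ℕ) (z : ℂ) (hz : 0 ≤ z.re) : R n z ≠ 0 := by
  intro h
  have hpos := re_inner_R_R_add_one_pos n hz
  rw [h, inner_zero_left, map_zero] at hpos
  exact hpos.false
end

section
/- Let γ > 1 be real and let n ≥ 1 be an integer. If w₀ ∈ ℂ satisfies Re w₀ > 0 and (1 − γ)·R_n(w₀) + 2·w₀²·R_n'(w₀) = 0, then Im w₀ = 0; that is, for γ > 1 the equation g_n(w) = ((1−γ)/(2w))R_n(w) + wR_n'(w) = 0 has no non-real roots in the right half-plane. -/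
/-!
The polynomial `R n` solves the Bessel equation `z² y'' + (2 z + 1) y' = n (n + 1) y`. Along the
path `1 / z(x) = 1 / w + x`, `x ≥ 0`, from `w` to `0`, the function `f(x) = R n (z(x))` therefore
solves the Sturm–Liouville equation `(e⁻ˣ f')' = n (n + 1) e⁻ˣ z(x)² f`. If `Re w ≥ 0` and
`Im w > 0`, then `z(x)` lies in the open first quadrant for `x > 0`, so `Im z(x)² > 0`, and by
Lagrange's identity `Im (conj f · e⁻ˣ f')` increases along the path. It tends to zero at infinity,
so it is negative at `x = 0`, that is, `Im (conj (R n w) · w² R_n'(w)) > 0`. At a root of the given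
equation `w² R_n'(w)` is a real multiple of `R n w`, and this imaginary part would be zero. The
lower half-plane follows by complex conjugation.
-/

open Complex Filter Polynomial Set Topology
open scoped ComplexConjugate

theorem lt_of_tendsto_of_hasDerivAt_nonneg {φ φ' : ℝ → ℝ} {a L : ℝ}
    (hφ : ∀ x ≥ a, HasDerivAt φ (φ' x) x) (hnonneg : ∀ x > a, 0 ≤ φ' x)
    (hpos : ∃ x > a, 0 < φ' x) (hlim : Tendsto φ atTop (𝓝 L)) : φ a < L := by
  have hmono : MonotoneOn φ (Ici a) :=
    monotoneOn_of_hasDerivWithinAt_nonneg (f' := φ') (convex_Ici a)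
      (fun x hx ↦ (hφ x hx).continuousAt.continuousWithinAt)
      (fun x hx ↦ (hφ x (interior_subset hx)).hasDerivWithinAt)
      (by rwa [interior_Ici])
  have hle : ∀ x ≥ a, φ x ≤ L := fun x hx ↦ ge_of_tendsto hlim <|
    (eventually_ge_atTop x).mono fun y hy ↦ hmono hx (hx.trans hy) hy
  obtain ⟨x, hx, hφ'x⟩ := hpos
  by_contra! hLa
  have hmax : IsLocalMax φ x := eventually_of_mem (Ioi_mem_nhds hx) fun y hy ↦
    (hle y (le_of_lt hy)).trans (hLa.trans (hmono self_mem_Ici (le_of_lt hx) (le_of_lt hx)))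
  exact hφ'x.ne' (hmax.hasDerivAt_eq_zero (hφ x hx.le))

/-- Lagrange's identity for the Sturm–Liouville equation `(r⁻¹ f')' = q f` with `r` real, written
as the first-order system `f' = r h`, `h' = q f`. -/
theorem hasDerivAt_im_conj_mul {f h : ℝ → ℂ} {r x : ℝ} {q : ℂ}
    (hf : HasDerivAt f (r * h x) x) (hh : HasDerivAt h (q * f x) x) :
    HasDerivAt (fun t ↦ (conj (f t) * h t).im) (q.im * normSq (f x)) x := by
  refine (imCLM.hasFDerivAt.comp_hasDerivAt x (hf.star.mul hh)).congr_deriv ?_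
  simp only [star_mul', RCLike.star_def, conj_ofReal, imCLM_apply, add_im, mul_im, mul_re,
    ofReal_re, conj_re, ofReal_im, conj_im, normSq_apply]
  ring

theorem im_conj_mul_neg_of_tendsto_zero {f h q : ℝ → ℂ} {r : ℝ → ℝ} {a : ℝ}
    (hf : ∀ x ≥ a, HasDerivAt f (r x * h x) x) (hh : ∀ x ≥ a, HasDerivAt h (q x * f x) x)
    (hq : ∀ x > a, 0 < (q x).im) (hne : ∃ x > a, f x ≠ 0)
    (hlim : Tendsto (fun x ↦ (conj (f x) * h x).im) atTop (𝓝 0)) :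
    (conj (f a) * h a).im < 0 := by
  refine lt_of_tendsto_of_hasDerivAt_nonneg (φ := fun x ↦ (conj (f x) * h x).im)
    (fun x hx ↦ hasDerivAt_im_conj_mul (hf x hx) (hh x hx))
    (fun x hx ↦ mul_nonneg (hq x hx).le (normSq_nonneg _)) ?_ hlim
  obtain ⟨x, hx, hfx⟩ := hne
  exact ⟨x, hx, mul_pos (hq x hx) (normSq_pos.2 hfx)⟩

/-- The path `x ↦ 1 / (1 / w + x)`, which for `x ≥ 0` leads from `w` to `0`. -/
noncomputable def inversionPath (w : ℂ) (x : ℝ) : ℂ :=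
  (w⁻¹ + x)⁻¹

namespace inversionPath

variable {w : ℂ} {x : ℝ}

@[simp]
theorem apply_zero (w : ℂ) : inversionPath w 0 = w := by
  simp [inversionPath]

theorem inv_add_ofReal_ne_zero (hw : w.im ≠ 0) (x : ℝ) : w⁻¹ + x ≠ 0 := by
  intro h
  have hw0 : w ≠ 0 := by rintro rfl; exact hw rfl
  have him : (w⁻¹).im = 0 := by simpa [-inv_im] using congrArg im h
  rw [inv_im, div_eq_zero_iff, neg_eq_zero] at him
  exact him.elim hw (normSq_pos.2 hw0).ne'

theorem im_pos (hw : 0 < w.im) (x : ℝ) : 0 < (inversionPath w x).im := by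
  have hw0 : w ≠ 0 := by rintro rfl; exact hw.false
  have him : (w⁻¹ + x).im < 0 := by
    rw [add_im, ofReal_im, add_zero, inv_im]
    exact div_neg_of_neg_of_pos (neg_neg_of_pos hw) (normSq_pos.2 hw0)
  rw [inversionPath, inv_im]
  exact div_pos (neg_pos.2 him) (normSq_pos.2 (inv_add_ofReal_ne_zero hw.ne' x))

theorem re_pos (hre : 0 ≤ w.re) (hx : 0 < x) : 0 < (inversionPath w x).re := by
  have hre' : 0 < (w⁻¹ + x).re := by
    rw [add_re, ofReal_re, inv_re]
    exact add_pos_of_nonneg_of_pos (div_nonneg hre (normSq_nonneg w)) hx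
  rw [inversionPath, inv_re]
  exact div_pos hre' (normSq_pos.2 fun h ↦ hre'.ne' (congrArg re h))

theorem im_sq_pos (hre : 0 ≤ w.re) (him : 0 < w.im) (hx : 0 < x) :
    0 < (inversionPath w x ^ 2).im := by
  have hz_re := re_pos hre hx
  have hz_im := im_pos him x
  rw [sq, mul_im]
  positivity

protected theorem hasDerivAt (hw : w.im ≠ 0) (x : ℝ) :
    HasDerivAt (inversionPath w) (-inversionPath w x ^ 2) x := by
  refine ((ofRealCLM.hasDerivAt.const_add w⁻¹).fun_inv
    (inv_add_ofReal_ne_zero hw x)).congr_deriv ?_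
  simp [inversionPath, neg_div]

theorem hasDerivAt_aeval {A : Type*} [CommSemiring A] [Algebra A ℂ] (p : A[X])
    (hw : w.im ≠ 0) (x : ℝ) :
    HasDerivAt (fun t ↦ aeval (inversionPath w t) p)
      (aeval (inversionPath w x) (derivative p) * -inversionPath w x ^ 2) x :=
  (p.hasDerivAt_aeval (inversionPath w x)).comp x (inversionPath.hasDerivAt hw x)

theorem tendsto_atTop (w : ℂ) : Tendsto (inversionPath w) atTop (𝓝 0) :=
  tendsto_inv₀_cobounded.comp <|
    (tendsto_const_add_cobounded w⁻¹).comp (RCLike.tendsto_ofReal_atTop_cobounded ℂ)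

theorem tendsto_aeval {A : Type*} [CommSemiring A] [Algebra A ℂ] (p : A[X]) (w : ℂ) :
    Tendsto (fun x ↦ aeval (inversionPath w x) p) atTop (𝓝 (aeval (0 : ℂ) p)) :=
  (p.continuous_aeval.tendsto 0).comp (tendsto_atTop w)

end inversionPath

theorem coeff_X_mul_derivative {A : Type*} [Semiring A] (p : A[X]) (m : ℕ) :
    (X * derivative p).coeff m = p.coeff m * m := by
  cases m <;> simp [coeff_X_mul, coeff_derivative]

/-- The polynomial `R n`, which is `yₙ(2X)` for the Bessel polynomial `yₙ` of Krall and Frink. Its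
coefficients `(n + m)! / (m! (n - m)!)` are written as `choose (n + m) m * n (n - 1) ⋯ (n - m + 1)`,
which is a natural number and vanishes for `m > n`. -/
noncomputable def besselPolynomial (n : ℕ) : ℕ[X] :=
  ∑ m ∈ Finset.range (n + 1), monomial m ((n + m).choose m * n.descFactorial m)

namespace besselPolynomial

theorem coeff_eq (n m : ℕ) :
    (besselPolynomial n).coeff m = (n + m).choose m * n.descFactorial m := by
  simp +contextual [besselPolynomial, coeff_monomial, Nat.descFactorial_eq_zero_iff_lt]

theorem coeff_succ_add (n m : ℕ) :
    (m + 1) * (besselPolynomial n).coeff (m + 1) + m * (m + 1) * (besselPolynomial n).coeff m =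
      n * (n + 1) * (besselPolynomial n).coeff m := by
  simp only [coeff_eq]
  obtain hmn | hnm := le_or_gt m n
  · obtain ⟨k, rfl⟩ := Nat.exists_eq_add_of_le hmn
    have hchoose := Nat.add_one_mul_choose_eq (m + k + m) m
    rw [Nat.descFactorial_succ, Nat.add_sub_cancel_left, ← add_assoc]
    calc
      _ = (m + k + m + 1).choose (m + 1) * (m + 1) * (k * (m + k).descFactorial m) +
          m * (m + 1) * ((m + k + m).choose m * (m + k).descFactorial m) := by ring
      _ = _ := by rw [← hchoose]; ring
  · simp [Nat.descFactorial_of_lt hnm]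

theorem bessel_equation (n : ℕ) :
    X ^ 2 * derivative (derivative (besselPolynomial n)) +
        2 * X * derivative (besselPolynomial n) + derivative (besselPolynomial n) =
      ((n * (n + 1) : ℕ) : ℕ[X]) * besselPolynomial n := by
  set p := besselPolynomial n
  have heuler : X ^ 2 * derivative (derivative p) + 2 * X * derivative p =
      X * derivative (X * derivative p) + X * derivative p := by
    rw [derivative_mul, derivative_X]
    ring
  ext m
  rw [heuler]
  simp only [coeff_add, coeff_X_mul_derivative, coeff_derivative, coeff_natCast_mul, Nat.cast_id]
  linear_combination coeff_succ_add n m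

theorem aeval_bessel_equation {A : Type*} [CommSemiring A] (n : ℕ) (z : A) :
    z ^ 2 * aeval z (derivative (derivative (besselPolynomial n))) +
        2 * z * aeval z (derivative (besselPolynomial n)) +
        aeval z (derivative (besselPolynomial n)) =
      n * (n + 1) * aeval z (besselPolynomial n) := by
  simpa [map_ofNat (aeval z) 2] using congrArg (aeval z) (bessel_equation n)

theorem aeval_zero {A : Type*} [Semiring A] (n : ℕ) : aeval (0 : A) (besselPolynomial n) = 1 := by
  rw [← coeff_zero_eq_aeval_zero', coeff_eq]
  simp

theorem cast_coeff_eq_div {K : Type*} [Field K] [CharZero K] {n m : ℕ} (hmn : m ≤ n) :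
    ((besselPolynomial n).coeff m : K) = (n + m).factorial / (m.factorial * (n - m).factorial) := by
  rw [coeff_eq, eq_div_iff (by simp [Nat.factorial_ne_zero]),
    ← Nat.add_choose_mul_factorial_mul_factorial, ← Nat.factorial_mul_descFactorial hmn]
  push_cast
  ring

end besselPolynomial

theorem R_eq_aeval (n : ℕ) : R n = fun z ↦ aeval z (besselPolynomial n) := by
  ext z
  rw [besselPolynomial, map_sum, R]
  refine Finset.sum_congr rfl fun m hm ↦ ?_
  rw [aeval_monomial, ← besselPolynomial.coeff_eq, eq_natCast,
    besselPolynomial.cast_coeff_eq_div (Finset.mem_range_succ_iff.1 hm)]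

theorem deriv_R (n : ℕ) (z : ℂ) : deriv (R n) z = aeval z (derivative (besselPolynomial n)) := by
  rw [R_eq_aeval, Polynomial.deriv_aeval]

/-- The quasi-derivative `e⁻ˣ f'(x)` of `f(x) = R n (z(x))`, where `z` is the inversion path
from `w`. -/
noncomputable def besselFlux (n : ℕ) (w : ℂ) (x : ℝ) : ℂ :=
  Real.exp (-x) *
    (aeval (inversionPath w x) (derivative (besselPolynomial n)) * -inversionPath w x ^ 2)

namespace besselFlux

variable {n : ℕ} {w : ℂ}

theorem hasDerivAt_aeval_inversionPath (hw : w.im ≠ 0) (x : ℝ) :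
    HasDerivAt (fun t ↦ aeval (inversionPath w t) (besselPolynomial n))
      (Real.exp x * besselFlux n w x) x := by
  refine (inversionPath.hasDerivAt_aeval _ hw x).congr_deriv ?_
  rw [besselFlux, ← mul_assoc, ← ofReal_mul, ← Real.exp_add, add_neg_cancel, Real.exp_zero,
    ofReal_one, one_mul]

protected theorem hasDerivAt (hw : w.im ≠ 0) (x : ℝ) :
    HasDerivAt (besselFlux n w)
      ((n * (n + 1) * Real.exp (-x) : ℝ) * inversionPath w x ^ 2 *
        aeval (inversionPath w x) (besselPolynomial n)) x := by
  have hexp : HasDerivAt (fun t : ℝ ↦ (Real.exp (-t) : ℂ)) (-Real.exp (-x) : ℝ) x := by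
    simpa using ((hasDerivAt_neg x).exp).ofReal_comp
  refine (hexp.fun_mul ((inversionPath.hasDerivAt_aeval _ hw x).fun_mul
    ((inversionPath.hasDerivAt hw x).fun_pow 2).fun_neg)).congr_deriv ?_
  push_cast
  linear_combination cexp (-x) * inversionPath w x ^ 2 *
    besselPolynomial.aeval_bessel_equation n (inversionPath w x)

theorem tendsto_atTop (n : ℕ) (w : ℂ) : Tendsto (besselFlux n w) atTop (𝓝 0) := by
  have hexp : Tendsto (fun x : ℝ ↦ (Real.exp (-x) : ℂ)) atTop (𝓝 0) := by
    exact_mod_cast (continuous_ofReal.tendsto 0).comp Real.tendsto_exp_neg_atTop_nhds_zero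
  simpa only [zero_mul] using! hexp.mul
    ((inversionPath.tendsto_aeval (derivative (besselPolynomial n)) w).mul
      ((inversionPath.tendsto_atTop w).pow 2).neg)

end besselFlux

theorem im_conj_mul_sq_mul_derivative_besselPolynomial_pos {n : ℕ} (hn : 1 ≤ n) {w : ℂ}
    (hre : 0 ≤ w.re) (him : 0 < w.im) :
    0 < (conj (aeval w (besselPolynomial n)) *
      (w ^ 2 * aeval w (derivative (besselPolynomial n)))).im := by
  have hlim_f := inversionPath.tendsto_aeval (besselPolynomial n) w
  rw [besselPolynomial.aeval_zero] at hlim_f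
  have hlim : Tendsto (fun x ↦ (conj (aeval (inversionPath w x) (besselPolynomial n)) *
      besselFlux n w x).im) atTop (𝓝 0) := by
    simpa only [mul_zero, zero_im] using!
      (continuous_im.tendsto _).comp (hlim_f.star.mul (besselFlux.tendsto_atTop n w))
  have hq : ∀ x > 0,
      0 < (((n * (n + 1) * Real.exp (-x) : ℝ) : ℂ) * inversionPath w x ^ 2).im := fun x hx ↦ by
    have hsq := inversionPath.im_sq_pos hre him hx
    rw [im_ofReal_mul]
    positivity
  have hneg := im_conj_mul_neg_of_tendsto_zero
    (fun x _ ↦ besselFlux.hasDerivAt_aeval_inversionPath him.ne' x)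
    (fun x _ ↦ besselFlux.hasDerivAt him.ne' x) hq
    ((eventually_gt_atTop 0).and (hlim_f.eventually_ne one_ne_zero)).exists hlim
  simpa [besselFlux, mul_comm] using hneg

theorem im_nonpos_of_sq_mul_derivative_besselPolynomial_eq {n : ℕ} (hn : 1 ≤ n) {w : ℂ}
    (hre : 0 ≤ w.re) {c : ℝ}
    (hroot : w ^ 2 * aeval w (derivative (besselPolynomial n)) =
      c * aeval w (besselPolynomial n)) :
    w.im ≤ 0 := by
  by_contra! him
  have hpos := im_conj_mul_sq_mul_derivative_besselPolynomial_pos hn hre him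
  rw [hroot, mul_left_comm, conj_mul', ← ofReal_pow, ← ofReal_mul, ofReal_im] at hpos
  exact hpos.false

theorem conj_aeval_nat (p : ℕ[X]) (z : ℂ) : conj (aeval z p) = aeval (conj z) p :=
  (aeval_algHom_apply (starRingEnd ℂ).toNatAlgHom z p).symm

theorem root_is_real_general (γ : ℝ) (n : ℕ) (hn : 1 ≤ n) (w₀ : ℂ) (hre : 0 ≤ w₀.re)
    (hroot : (1 - (γ : ℂ)) * R n w₀ + 2 * w₀ ^ 2 * deriv (R n) w₀ = 0) :
    w₀.im = 0 := by
  have hreal : w₀ ^ 2 * aeval w₀ (derivative (besselPolynomial n)) =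
      ((γ - 1) / 2 : ℝ) * aeval w₀ (besselPolynomial n) := by
    rw [deriv_R, R_eq_aeval] at hroot
    push_cast
    linear_combination hroot / 2
  have hreal_conj := congrArg conj hreal
  simp only [map_mul, map_pow, conj_ofReal, conj_aeval_nat] at hreal_conj
  have hle := im_nonpos_of_sq_mul_derivative_besselPolynomial_eq hn hre hreal
  have hge := im_nonpos_of_sq_mul_derivative_besselPolynomial_eq hn (w := conj w₀) hre hreal_conj
  rw [conj_im, neg_nonpos] at hge
  exact le_antisymm hle hge

/-- For real `γ > 1` and `n ≥ 1`, any root `w₀` of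
`(1 − γ) R_n(w) + 2 w² R_n'(w) = 0` with `Re w₀ > 0` is real. -/
theorem root_is_real (γ : ℝ) (hγ : 1 < γ) (n : ℕ) (hn : 1 ≤ n) (w₀ : ℂ)
    (hre : 0 < w₀.re)
    (hroot : (1 - (γ : ℂ)) * R n w₀ + 2 * w₀ ^ 2 * deriv (R n) w₀ = 0) :
    w₀.im = 0 :=
  root_is_real_general γ n hn w₀ hre.le hroot
end
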